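/- Let r and n be integers with 2 ≤ r and n ≥ r+1, and let G be a K_{r+1}-saturated simple graph on n vertices. Then ∑_{v ∈ V(G)} (d(v)+1)(d(v)+1-r) ≥ (r-1)·n·(n-r), where d(v) denotes the degree of v and the sum is computed in the integers. -/

import Mathlib

open SimpleGraph

/-- A graph `G` is `K_r`-saturated if it contains no `r`-clique, but adding any edge
between distinct non-adjacent vertices creates an `r`-clique. -/
def IsKSaturated {V : Type*} (r : ℕ) (G : SimpleGraph V) : Prop :=
  G.CliqueFree r ∧ ∀ u v : V, u ≠ v → ¬ G.Adj u v →
    ¬ (G ⊔ SimpleGraph.fromEdgeSet {s(u, v)}).CliqueFree r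

/-! Fix a `k`-clique `K e` joined to both ends of each non-edge `e`, where `k = r - 1`. For a vertex
`v`, consider the non-edges `e` with `v ∈ K e`. Such an `e`, together with `K e`, lies in the closed
neighbourhood of `v`, and `e` is the only non-edge inside `e ∪ K e`. Hence the pairs
`(e, N(v) \ (e ∪ K e))` satisfy Bollobás's set-pair condition, with sizes `2` and `d(v) - k - 1`, so
there are at most `(d(v) + 1 - k).choose 2` of them. Summing over `v` counts every non-edge `k`
times, and the number of non-edges is determined by the degree sum. -/

section SetPairs

open Finset

variable {ι α : Type*} {I : Finset ι} {A B : ι → Finset α}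

/-- A Bollobás set-pair system: `A i` and `B j` are disjoint exactly when `i = j`. The sets are
indexed so that only the members of the finite set `I` matter. -/
structure IsBollobasSystem (I : Finset ι) (A B : ι → Finset α) : Prop where
  disjoint : ∀ i ∈ I, Disjoint (A i) (B i)
  not_disjoint : ∀ i ∈ I, ∀ j ∈ I, i ≠ j → ¬ Disjoint (A i) (B j)

namespace IsBollobasSystem

theorem right_nonempty (h : IsBollobasSystem I A B) (hI : I.Nontrivial) {i : ι} (hi : i ∈ I) :
    (B i).Nonempty := by
  obtain ⟨j, hj, hji⟩ := hI.exists_ne i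
  rw [nonempty_iff_ne_empty]
  intro hB
  exact h.not_disjoint j hj i hi hji (hB ▸ disjoint_empty_right _)

variable [DecidableEq α]

theorem erase (h : IsBollobasSystem I A B) (x : α) :
    IsBollobasSystem {i ∈ I | x ∉ A i} A fun i ↦ (B i).erase x where
  disjoint i hi := (h.disjoint i (mem_filter.mp hi).1).mono_right (erase_subset _ _)
  not_disjoint i hi j hj hij := by
    obtain ⟨hi, hx⟩ := mem_filter.mp hi
    rw [← disjoint_erase_comm, erase_eq_of_notMem hx]
    exact h.not_disjoint i hi j (mem_filter.mp hj).1 hij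

end IsBollobasSystem

variable {𝕜 : Type*} [Field 𝕜] [LinearOrder 𝕜] [IsStrictOrderedRing 𝕜]

theorem succ_mul_inv_add_choose (a b : ℕ) :
    ((b : 𝕜) + 1) * ((a + b).choose a : 𝕜)⁻¹
      = (a + (b + 1)) * ((a + (b + 1)).choose a : 𝕜)⁻¹ := by
  have hchoose : ((a + b).choose a : 𝕜) * (a + (b + 1))
      = (a + (b + 1)).choose a * (b + 1) := by
    have := Nat.choose_mul_succ_eq (a + b) a
    rw [add_assoc, Nat.add_sub_cancel_left] at this
    exact_mod_cast this
  have h₁ : ((a + b).choose a : 𝕜) ≠ 0 := mod_cast Nat.choose_ne_zero (by lia)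
  have h₂ : ((a + (b + 1)).choose a : 𝕜) ≠ 0 := mod_cast Nat.choose_ne_zero (by lia)
  field_simp
  linear_combination -hchoose

theorem sum_inv_choose_card_erase [DecidableEq α] {U S T : Finset α} (hS : S ⊆ U) (hT : T ⊆ U)
    (hST : Disjoint S T) (hT₀ : T.Nonempty) :
    ∑ x ∈ U \ S, ((#S + #(T.erase x)).choose #S : 𝕜)⁻¹
      = #U * ((#S + #T).choose #S : 𝕜)⁻¹ := by
  obtain ⟨b, hb⟩ := Nat.exists_eq_add_one.mpr hT₀.card_pos
  have hTU : T ⊆ U \ S := subset_sdiff.mpr ⟨hT, hST.symm⟩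
  have hcard : (#((U \ S) \ T) : 𝕜) = #U - #S - #T := by
    rw [cast_card_sdiff hTU, cast_card_sdiff hS]
  have sum_inside : ∑ x ∈ T, ((#S + #(T.erase x)).choose #S : 𝕜)⁻¹
      = (#S + #T) * ((#S + #T).choose #S : 𝕜)⁻¹ := by
    rw [sum_congr rfl fun x hx ↦ by rw [card_erase_of_mem hx], sum_const, nsmul_eq_mul, hb]
    simpa using succ_mul_inv_add_choose (𝕜 := 𝕜) #S b
  have sum_outside : ∑ x ∈ (U \ S) \ T, ((#S + #(T.erase x)).choose #S : 𝕜)⁻¹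
      = (#U - #S - #T) * ((#S + #T).choose #S : 𝕜)⁻¹ := by
    rw [sum_congr rfl fun x hx ↦ by rw [erase_eq_of_notMem (mem_sdiff.mp hx).2], sum_const,
      nsmul_eq_mul, hcard]
  rw [← sum_sdiff hTU, sum_inside, sum_outside]
  ring

namespace IsBollobasSystem

variable (𝕜) in
theorem sum_inv_choose_le_one (h : IsBollobasSystem I A B) :
    ∑ i ∈ I, ((#(A i) + #(B i)).choose #(A i) : 𝕜)⁻¹ ≤ 1 := by
  classical
  obtain ⟨U, hA, hB⟩ : ∃ U, (∀ i ∈ I, A i ⊆ U) ∧ ∀ i ∈ I, B i ⊆ U :=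
    ⟨I.biUnion A ∪ I.biUnion B,
      fun i hi ↦ (subset_biUnion_of_mem A hi).trans subset_union_left,
      fun i hi ↦ (subset_biUnion_of_mem B hi).trans subset_union_right⟩
  induction U using Finset.strongInduction generalizing I B with
  | H U ih =>
  rcases le_or_gt #I 1 with hI | hI
  · calc
      _ ≤ #I • (1 : 𝕜) := sum_le_card_nsmul _ _ _ fun i _ ↦
        inv_le_one_of_one_le₀ (mod_cast Nat.choose_pos (Nat.le_add_right _ _))
      _ ≤ 1 := by simpa using hI
  replace hI : I.Nontrivial := one_lt_card_iff_nontrivial.mp hI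
  have hU : (0 : 𝕜) < #U := by
    obtain ⟨i, hi⟩ := hI.nonempty
    exact_mod_cast ((h.right_nonempty hI hi).mono (hB i hi)).card_pos
  -- Average the induction hypothesis for `h.erase x` over `x ∈ U`.
  refine le_of_mul_le_mul_left ?_ hU
  calc #U * ∑ i ∈ I, ((#(A i) + #(B i)).choose #(A i) : 𝕜)⁻¹
      = ∑ i ∈ I, ∑ x ∈ U \ A i, ((#(A i) + #((B i).erase x)).choose #(A i) : 𝕜)⁻¹ := by
        rw [mul_sum]
        exact sum_congr rfl fun i hi ↦ (sum_inv_choose_card_erase (hA i hi) (hB i hi)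
          (h.disjoint i hi) (h.right_nonempty hI hi)).symm
    _ = ∑ x ∈ U, ∑ i ∈ I with x ∉ A i, ((#(A i) + #((B i).erase x)).choose #(A i) : 𝕜)⁻¹ :=
        sum_comm' fun i x ↦ by simp only [mem_sdiff, mem_filter]; tauto
    _ ≤ ∑ _x ∈ U, 1 := by
        refine sum_le_sum fun x hx ↦ ih (U.erase x) (erase_ssubset hx) (h.erase x) ?_ ?_
        · intro i hi
          obtain ⟨hi, hxi⟩ := mem_filter.mp hi
          exact subset_erase.mpr ⟨hA i hi, hxi⟩
        · exact fun i hi ↦ erase_subset_erase x (hB i (mem_filter.mp hi).1)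
    _ = #U * 1 := by simp

theorem card_le_choose (h : IsBollobasSystem I A B) {a b : ℕ} (ha : ∀ i ∈ I, #(A i) = a)
    (hb : ∀ i ∈ I, #(B i) = b) : #I ≤ (a + b).choose a := by
  have hsum := h.sum_inv_choose_le_one ℚ
  have hpos : (0 : ℚ) < (a + b).choose a := mod_cast Nat.choose_pos (Nat.le_add_right a b)
  rw [sum_congr rfl fun i hi ↦ by rw [ha i hi, hb i hi], sum_const, nsmul_eq_mul,
    ← div_eq_mul_inv, div_le_one hpos] at hsum
  exact_mod_cast hsum

end IsBollobasSystem

end SetPairs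

section Saturation

open Finset

variable {V : Type*} {G : SimpleGraph V} {k r : ℕ}

/-- A graph is strongly `K_r`-saturated if adding any missing edge creates a new `r`-clique. Unlike
for `IsKSaturated`, the graph itself may already contain `r`-cliques. -/
def IsStronglySaturated (r : ℕ) (G : SimpleGraph V) : Prop :=
  ∀ u v : V, u ≠ v → ¬ G.Adj u v → ∃ s : Finset V, (G ⊔ edge u v).IsNClique r s ∧ ¬ G.IsClique s

theorem IsKSaturated.isStronglySaturated (h : IsKSaturated r G) : IsStronglySaturated r G := by
  intro u v huv hadj
  obtain ⟨s, hs⟩ := not_forall_not.mp (h.2 u v huv hadj)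
  exact ⟨s, hs, fun hclique ↦ h.1 s ⟨hclique, hs.card_eq⟩⟩

/-- `K` is a `k`-clique contained in the common neighbourhood of the two ends of `e`. For a non-edge
`e`, this means that adding `e` to `G` turns `e ∪ K` into a `(k + 2)`-clique. -/
structure IsCommonClique (G : SimpleGraph V) (k : ℕ) (e : Sym2 V) (K : Finset V) : Prop where
  isNClique : G.IsNClique k K
  adj : ∀ u ∈ e, ∀ w ∈ K, G.Adj u w

theorem IsStronglySaturated.exists_isCommonClique (h : IsStronglySaturated (k + 2) G) :
    ∀ e ∈ Gᶜ.edgeSet, ∃ K, IsCommonClique G k e K := by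
  classical
  rintro ⟨u, v⟩ ⟨huv, hadj⟩
  obtain ⟨s, hs, hclique⟩ := h u v huv hadj
  have hsu : G.IsClique (s \ {u}) := hs.isClique.sdiff_of_sup_edge
  have hsv : G.IsClique (s \ {v}) := (edge_comm u v ▸ hs.isClique).sdiff_of_sup_edge
  have hu : u ∈ s := by
    by_contra hu
    rw [Set.sdiff_singleton_eq_self (mod_cast hu)] at hsu
    exact hclique hsu
  have hv : v ∈ s := by
    by_contra hv
    rw [Set.sdiff_singleton_eq_self (mod_cast hv)] at hsv
    exact hclique hsv
  refine ⟨(s.erase u).erase v, ⟨hsu.subset ?_, ?_⟩, ?_⟩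
  · rw [← coe_erase]
    exact mod_cast erase_subset _ _
  · rw [card_erase_of_mem (mem_erase.mpr ⟨huv.symm, hv⟩), card_erase_of_mem hu, hs.card_eq]
    lia
  · intro x hx w hw
    simp only [mem_erase] at hw
    obtain ⟨hwv, hwu, hws⟩ := hw
    rcases Sym2.mem_iff.mp hx with rfl | rfl
    · exact hsv ⟨hu, huv⟩ ⟨hws, hwv⟩ hwu.symm
    · exact hsu ⟨hv, huv.symm⟩ ⟨hws, hwu⟩ hwv.symm

namespace IsCommonClique

variable {e f : Sym2 V} {K : Finset V} {v : V}

theorem eq_of_forall_mem_or_mem (hK : IsCommonClique G k f K) (he : e ∈ Gᶜ.edgeSet)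
    (hsub : ∀ x ∈ e, x ∈ f ∨ x ∈ K) : e = f := by
  induction e with
  | _ x y =>
    obtain ⟨hxy, hadj⟩ := he
    rcases hsub x (Sym2.mem_mk_left x y), hsub y (Sym2.mem_mk_right x y) with ⟨hx | hx, hy | hy⟩
    · exact ((Sym2.mem_and_mem_iff hxy).mp ⟨hx, hy⟩).symm
    · exact absurd (hK.adj x hx y hy) hadj
    · exact absurd (hK.adj y hy x hx).symm hadj
    · exact absurd (hK.isNClique.isClique hx hy hxy) hadj

variable [DecidableEq V]

theorem disjoint_toFinset (hK : IsCommonClique G k e K) : Disjoint e.toFinset K :=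
  disjoint_left.mpr fun x hxe hxK ↦ G.irrefl (hK.adj x (Sym2.mem_toFinset.mp hxe) x hxK)

theorem toFinset_union_erase_subset_neighborFinset [Fintype (G.neighborSet v)]
    (hK : IsCommonClique G k e K) (hv : v ∈ K) :
    e.toFinset ∪ K.erase v ⊆ G.neighborFinset v := by
  refine union_subset (fun x hx ↦ ?_) fun x hx ↦ ?_ <;> rw [mem_neighborFinset]
  · exact (hK.adj x (Sym2.mem_toFinset.mp hx) v hv).symm
  · obtain ⟨hxv, hxK⟩ := mem_erase.mp hx
    exact hK.isNClique.isClique hv hxK hxv.symm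

theorem card_toFinset_union_erase (hK : IsCommonClique G k e K) (he : ¬ e.IsDiag) (hv : v ∈ K) :
    #(e.toFinset ∪ K.erase v) = k + 1 := by
  have hpos := card_pos.mpr ⟨v, hv⟩
  rw [card_union_of_disjoint (hK.disjoint_toFinset.mono_right (erase_subset _ _)),
    Sym2.card_toFinset_of_not_isDiag e he, card_erase_of_mem hv]
  rw [hK.isNClique.card_eq] at hpos ⊢
  lia

end IsCommonClique

section LocalBound

variable {I : Finset (Sym2 V)} {K : Sym2 V → Finset V} {v : V}
  [Fintype (G.neighborSet v)]

theorem isBollobasSystem_toFinset_neighborFinset_sdiff [DecidableEq V]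
    (hI : ∀ e ∈ I, e ∈ Gᶜ.edgeSet) (hK : ∀ e ∈ I, IsCommonClique G k e (K e))
    (hv : ∀ e ∈ I, v ∈ K e) :
    IsBollobasSystem I Sym2.toFinset
      fun e ↦ G.neighborFinset v \ (e.toFinset ∪ (K e).erase v) where
  disjoint _ _ := disjoint_sdiff.mono_left subset_union_left
  not_disjoint e he f hf hef hdisj := by
    refine hef ((hK f hf).eq_of_forall_mem_or_mem (hI e he) fun x hx ↦ ?_)
    rw [← Sym2.mem_toFinset] at hx
    have hxv : x ∈ G.neighborFinset v :=
      (hK e he).toFinset_union_erase_subset_neighborFinset (hv e he) (mem_union_left _ hx)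
    have hxf : x ∈ f.toFinset ∪ (K f).erase v := by
      by_contra hxf
      exact disjoint_left.mp hdisj hx (mem_sdiff.mpr ⟨hxv, hxf⟩)
    simp only [mem_union, Sym2.mem_toFinset, mem_erase] at hxf
    exact hxf.imp_right And.right

theorem card_le_degree_add_one_sub_choose_two (hI : ∀ e ∈ I, e ∈ Gᶜ.edgeSet)
    (hK : ∀ e ∈ I, IsCommonClique G k e (K e)) (hv : ∀ e ∈ I, v ∈ K e) :
    #I ≤ (G.degree v + 1 - k).choose 2 := by
  classical
  have hdiag (e) (he : e ∈ I) : ¬ e.IsDiag := Gᶜ.not_isDiag_of_mem_edgeSet (hI e he)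
  have hsub (e) (he : e ∈ I) : e.toFinset ∪ (K e).erase v ⊆ G.neighborFinset v :=
    (hK e he).toFinset_union_erase_subset_neighborFinset (hv e he)
  have hcard (e) (he : e ∈ I) : #(e.toFinset ∪ (K e).erase v) = k + 1 :=
    (hK e he).card_toFinset_union_erase (hdiag e he) (hv e he)
  rcases I.eq_empty_or_nonempty with rfl | ⟨e, he⟩
  · exact Nat.zero_le _
  have hk : k + 1 ≤ G.degree v := by
    rw [← hcard e he, ← card_neighborFinset_eq_degree]
    exact card_le_card (hsub e he)
  have hsize : G.degree v + 1 - k = 2 + (G.degree v - (k + 1)) := by lia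
  rw [hsize]
  refine (isBollobasSystem_toFinset_neighborFinset_sdiff hI hK hv).card_le_choose
    (fun e he ↦ Sym2.card_toFinset_of_not_isDiag e (hdiag e he)) fun e he ↦ ?_
  rw [card_sdiff_of_subset (hsub e he), card_neighborFinset_eq_degree, hcard e he]

end LocalBound

theorem two_mul_choose_two_add_one_sub_le (d k : ℕ) :
    2 * ((d + 1 - k).choose 2 : ℤ) ≤ (d + 1 - k) * (d - k) := by
  rcases le_or_gt k d with hkd | hdk
  · obtain ⟨m, rfl⟩ := Nat.exists_eq_add_of_le hkd
    have hm : (m + 1) * m = (m + 1).choose 2 * 2 := by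
      simpa using Nat.add_one_mul_choose_eq m 1
    zify at hm
    rw [add_assoc, Nat.add_sub_cancel_left, Nat.cast_add]
    linear_combination -hm
  · rw [Nat.choose_eq_zero_of_lt (by lia), Nat.cast_zero, mul_zero]
    exact mul_nonneg_of_nonpos_of_nonpos (by lia) (by lia)

variable [Fintype V]

theorem sum_card_filter_mem_eq [DecidableEq V] {E : Finset (Sym2 V)} {K : Sym2 V → Finset V}
    (hK : ∀ e ∈ E, IsCommonClique G k e (K e)) : ∑ v, #{e ∈ E | v ∈ K e} = #E * k := by
  calc
    _ = ∑ e ∈ E, #{v | v ∈ K e} := sum_card_bipartiteAbove_eq_sum_card_bipartiteBelow _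
    _ = #E * k := by
      rw [← smul_eq_mul, ← sum_const]
      exact sum_congr rfl fun e he ↦ by rw [filter_univ_mem, (hK e he).isNClique.card_eq]

variable [DecidableRel G.Adj]

theorem degree_add_degree_compl [DecidableEq V] (v : V) :
    G.degree v + Gᶜ.degree v + 1 = Fintype.card V := by
  have := G.degree_lt_card_verts v
  rw [degree_compl]
  lia

theorem IsStronglySaturated.mul_sum_degree_compl_le [DecidableEq V]
    (h : IsStronglySaturated (k + 2) G) :
    (k : ℤ) * ∑ v, (Gᶜ.degree v : ℤ) ≤ ∑ v, ((G.degree v : ℤ) + 1 - k) * (G.degree v - k) := by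
  choose! K hK using h.exists_isCommonClique
  have hE (e) (he : e ∈ Gᶜ.edgeFinset) : e ∈ Gᶜ.edgeSet := mem_edgeFinset.mp he
  calc (k : ℤ) * ∑ v, (Gᶜ.degree v : ℤ)
      = 2 * ∑ v, (#{e ∈ Gᶜ.edgeFinset | v ∈ K e} : ℤ) := by
        have hcount := sum_card_filter_mem_eq fun e he ↦ hK e (hE e he)
        have hdegree := Gᶜ.sum_degrees_eq_twice_card_edges
        zify at hcount hdegree
        rw [hcount, hdegree]
        ring
    _ = ∑ v, 2 * (#{e ∈ Gᶜ.edgeFinset | v ∈ K e} : ℤ) := mul_sum _ _ _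
    _ ≤ ∑ v, ((G.degree v : ℤ) + 1 - k) * (G.degree v - k) := by
        refine sum_le_sum fun v _ ↦ le_trans ?_ (two_mul_choose_two_add_one_sub_le _ k)
        have hlocal : #{e ∈ Gᶜ.edgeFinset | v ∈ K e} ≤ (G.degree v + 1 - k).choose 2 :=
          card_le_degree_add_one_sub_choose_two (fun e he ↦ hE e (mem_filter.mp he).1)
            (fun e he ↦ hK e (hE e (mem_filter.mp he).1)) fun e he ↦ (mem_filter.mp he).2
        exact_mod_cast Nat.mul_le_mul_left 2 hlocal

theorem stmt_6_general (h : IsStronglySaturated (k + 2) G) :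
    (k : ℤ) * Fintype.card V * (Fintype.card V - (k + 1))
      ≤ ∑ v, ((G.degree v : ℤ) + 1) * (G.degree v - k) := by
  classical
  have hdegree (v : V) : (Fintype.card V : ℤ) = G.degree v + Gᶜ.degree v + 1 :=
    mod_cast (degree_add_degree_compl v).symm
  calc (k : ℤ) * Fintype.card V * (Fintype.card V - (k + 1))
      = ∑ _v : V, (k : ℤ) * (Fintype.card V - (k + 1)) := by
        rw [sum_const, card_univ, nsmul_eq_mul]
        ring
    _ = k * ∑ v, (Gᶜ.degree v : ℤ) + ∑ v, (k : ℤ) * (G.degree v - k) := by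
        rw [mul_sum, ← sum_add_distrib]
        exact sum_congr rfl fun v _ ↦ by rw [hdegree v]; ring
    _ ≤ ∑ v, ((G.degree v : ℤ) + 1 - k) * (G.degree v - k)
          + ∑ v, (k : ℤ) * (G.degree v - k) := by
        gcongr
        exact h.mul_sum_degree_compl_le
    _ = ∑ v, ((G.degree v : ℤ) + 1) * (G.degree v - k) := by
        rw [← sum_add_distrib]
        exact sum_congr rfl fun v _ ↦ by ring

end Saturation

theorem stmt_6 {V : Type*} [Fintype V] [DecidableEq V] (r n : ℕ) (hr : 2 ≤ r)
    (hn : r + 1 ≤ n) (hcard : Fintype.card V = n)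
    (G : SimpleGraph V) [DecidableRel G.Adj] (hsat : IsKSaturated (r + 1) G) :
    ∑ v : V, ((G.degree v : ℤ) + 1) * ((G.degree v : ℤ) + 1 - (r : ℤ))
      ≥ ((r : ℤ) - 1) * (n : ℤ) * ((n : ℤ) - (r : ℤ)) := by
  obtain ⟨k, rfl⟩ := Nat.exists_eq_add_of_le' (one_le_two.trans hr)
  simpa [hcard] using stmt_6_general hsat.isStronglySaturated
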